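/- arXiv:2105.14366 — 2 statements merged into one kernel-verified Lean document; each statement's English description precedes it below -/
import Mathlib

section
/- (Theorem 3.4(i), sufficient optimality for weakly robust efficient solutions.) Suppose z̄ ∈ F satisfies the robust KKT condition (with respect to the subdifferential data S, T) and the pair (f,g) is type I pseudo convex at z̄ (with respect to S, T). Then z̄ is a weakly robust efficient solution, i.e., for every z ∈ F one has f(z) − f(z̄) ∉ −int K. -/
/-!
Suppose `z` is robust feasible and `f z - f zbar ∈ -interior K`. The KKT functional `y*` is nonzero
and nonnegative on `K`, hence positive on `interior K`, so `y* (f z) < y* (f zbar)` and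
pseudoconvexity gives `v* (z - zbar) < 0`. A constraint with a positive multiplier has worst-case
value `0` at `zbar`, so each of its worst-case scenarios `u` satisfies
`g z u ≤ 0 = g zbar u` and has all its subgradients nonpositive at `z - zbar`; this inequality
describes a weak* closed half-space, so it passes to the weak* closed convex hull. Evaluating
`v* + ∑ μᵢ uᵢ* = 0` at `z - zbar` then gives `0 ≤ v* (z - zbar)`, a contradiction.
-/

theorem apply_nonneg_of_add_sum_smul_eq_zero {E ι : Type*} [AddCommMonoid E] [Module ℝ E]
    [Fintype ι] {φ : E →ₗ[ℝ] ℝ} {v : E} {u : ι → E} {μ : ι → ℝ}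
    (hsum : v + ∑ i, μ i • u i = 0) (hu : ∀ i, μ i * φ (u i) ≤ 0) : 0 ≤ φ v := by
  have heval : φ v + ∑ i, μ i * φ (u i) = 0 := by
    simpa only [map_add, map_sum, map_smul, smul_eq_mul, map_zero] using congrArg φ hsum
  linarith [Finset.sum_nonpos fun i (_ : i ∈ Finset.univ) => hu i]

theorem apply_le_of_mem_closure_convexHull {E : Type*} [AddCommMonoid E] [Module ℝ E]
    [TopologicalSpace E] {φ : E →L[ℝ] ℝ} {A : Set E} {c : ℝ} (hA : ∀ a ∈ A, φ a ≤ c)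
    {x : E} (hx : x ∈ closure (convexHull ℝ A)) : φ x ≤ c :=
  closure_minimal (convexHull_min hA (convex_halfSpace_le φ.isLinear c))
    (isClosed_le φ.continuous continuous_const) hx

theorem apply_pos_of_mem_interior {E : Type*} [AddCommGroup E] [Module ℝ E] [TopologicalSpace E]
    [ContinuousAdd E] [ContinuousSMul ℝ E] {φ : E →L[ℝ] ℝ} (hφ : φ ≠ 0)
    {A : Set E} (hA : ∀ a ∈ A, 0 ≤ φ a) {x : E} (hx : x ∈ interior A) : 0 < φ x := by
  have hmaps : Set.MapsTo φ (interior A) (interior (Set.Ici 0)) :=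
    (φ.isOpenMap_of_ne_zero hφ).mapsTo_interior hA
  simpa only [interior_Ici, Set.mem_Ioi] using hmaps hx

section RobustConstraints

variable {Z 𝒰 : Type*}

/-- The robust feasible set `F`: the points satisfying every constraint in every scenario. -/
def robustFeasibleSet {ι : Type*} (g : ι → Z → 𝒰 → ℝ) : Set Z :=
  {z | ∀ i u, g i z u ≤ 0}

/-- The worst-case scenarios of a constraint value `h : 𝒰 → ℝ`, i.e. its maximizers; the set
`𝒰ᵢ(y)` is `worstCaseScenarios (g i y)`. -/
def worstCaseScenarios (h : 𝒰 → ℝ) : Set 𝒰 :=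
  {u | ∀ u', h u' ≤ h u}

variable [AddCommGroup Z] [Module ℝ Z] [TopologicalSpace Z]

/-- The weak* closed convex hull of the subgradients at the worst-case scenarios of `h`, which
stands in for the subdifferential of the robust constraint `sup_u g(·, u)`. Here `h` is the function
`g(y, ·)` and `T u` the set of subgradients of `g(·, u)` at the same point `y`. -/
def worstCaseSubgradients (h : 𝒰 → ℝ) (T : 𝒰 → Set (WeakDual ℝ Z)) : Set (WeakDual ℝ Z) :=
  closure (convexHull ℝ (⋃ u ∈ worstCaseScenarios h, T u))

theorem apply_nonpos_of_mem_worstCaseSubgradients {h : 𝒰 → ℝ} {T : 𝒰 → Set (WeakDual ℝ Z)} {x : Z}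
    (hT : ∀ u ∈ worstCaseScenarios h, ∀ w ∈ T u, w x ≤ 0) {w : WeakDual ℝ Z}
    (hw : w ∈ worstCaseSubgradients h T) : w x ≤ 0 := by
  refine apply_le_of_mem_closure_convexHull (φ := WeakBilin.eval (topDualPairing ℝ Z) x) ?_ hw
  intro a ha
  obtain ⟨u, hu, hau⟩ := Set.mem_iUnion₂.mp ha
  exact hT u hu a hau

theorem mul_apply_nonpos_of_complementarySlackness {g : Z → 𝒰 → ℝ} {T : 𝒰 → Set (WeakDual ℝ Z)}
    {y z : Z} (hT : ∀ u, g z u ≤ g y u → ∀ w ∈ T u, w (z - y) ≤ 0) (hz : ∀ u, g z u ≤ 0)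
    {m : ℝ} (hm : 0 ≤ m) {ubar : 𝒰} (hslack : m * g y ubar = 0) {w : WeakDual ℝ Z}
    (hw : w ∈ worstCaseSubgradients (g y) T) : m * w (z - y) ≤ 0 := by
  rcases mul_eq_zero.mp hslack with hm_zero | hactive
  · simp only [hm_zero, zero_mul, le_refl]
  · refine mul_nonpos_of_nonneg_of_nonpos hm (apply_nonpos_of_mem_worstCaseSubgradients ?_ hw)
    intro u hu
    exact hT u ((hz u).trans (hactive.symm.trans_le (hu ubar)))

end RobustConstraints

section RobustOptimality

variable {Z Y 𝒰 ι : Type*} [AddCommGroup Z] [Module ℝ Z] [TopologicalSpace Z]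
  [AddCommGroup Y] [Module ℝ Y] [TopologicalSpace Y]

/-- Type I pseudoconvexity of `(f, g)` at `y`. Only the subdifferential data at `y` enter:
`S w` plays the role of `∂⟨w, f⟩(y)` and `T i u` that of `∂_z gᵢ(y, u)`. -/
structure IsTypeIPseudoconvexAt (K : Set Y) (f : Z → Y) (g : ι → Z → 𝒰 → ℝ)
    (S : (Y →L[ℝ] ℝ) → Set (WeakDual ℝ Z)) (T : ι → 𝒰 → Set (WeakDual ℝ Z)) (y : Z) : Prop where
  objective : ∀ z, ∀ w : Y →L[ℝ] ℝ, (∀ k ∈ K, 0 ≤ w k) → w (f z) < w (f y) →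
    ∀ v ∈ S w, v (z - y) < 0
  constraint : ∀ z u i, g i z u ≤ g i y u → ∀ w ∈ T i u, w (z - y) ≤ 0

/-- The robust KKT condition at `y`, with `S` and `T` the subdifferential data at `y` as in
`IsTypeIPseudoconvexAt`. Feasibility of `y` is not part of the condition. -/
def SatisfiesRobustKKT [Fintype ι] (K : Set Y) (g : ι → Z → 𝒰 → ℝ)
    (S : (Y →L[ℝ] ℝ) → Set (WeakDual ℝ Z)) (T : ι → 𝒰 → Set (WeakDual ℝ Z)) (y : Z) : Prop :=
  ∃ w : Y →L[ℝ] ℝ, (∀ k ∈ K, 0 ≤ w k) ∧ w ≠ 0 ∧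
    ∃ μ : ι → ℝ, (∀ i, 0 ≤ μ i) ∧ ∃ v ∈ S w, ∃ u : ι → WeakDual ℝ Z,
      (∀ i, u i ∈ worstCaseSubgradients (g i y) (T i)) ∧ v + ∑ i, μ i • u i = 0 ∧
      ∀ i, ∃ ubar ∈ worstCaseScenarios (g i y), μ i * g i y ubar = 0

theorem sufficient_optimality_weakly_robust_efficient_general [ContinuousAdd Y]
    [ContinuousSMul ℝ Y] [Fintype ι] {K : Set Y} {f : Z → Y} {g : ι → Z → 𝒰 → ℝ}
    {S : (Y →L[ℝ] ℝ) → Set (WeakDual ℝ Z)} {T : ι → 𝒰 → Set (WeakDual ℝ Z)} {zbar : Z}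
    (hKKT : SatisfiesRobustKKT K g S T zbar) (hpc : IsTypeIPseudoconvexAt K f g S T zbar) :
    ∀ z ∈ robustFeasibleSet g, f z - f zbar ∉ -interior K := by
  intro z hz hdom
  obtain ⟨w, hwK, hw_ne, μ, hμ, v, hv, u, hu, hsum, hslack⟩ := hKKT
  have hdecrease : w (f z) < w (f zbar) := by
    have hpos : 0 < w (-(f z - f zbar)) := apply_pos_of_mem_interior hw_ne hwK hdom
    simpa only [neg_sub, map_sub, sub_pos] using hpos
  have hconstraint (i : ι) : μ i * u i (z - zbar) ≤ 0 := by
    obtain ⟨ubar, -, hubar⟩ := hslack i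
    exact mul_apply_nonpos_of_complementarySlackness (fun u => hpc.constraint z u i) (hz i)
      (hμ i) hubar (hu i)
  exact (hpc.objective z w hwK hdecrease v hv).not_ge
    (apply_nonneg_of_add_sum_smul_eq_zero
      (φ := (WeakBilin.eval (topDualPairing ℝ Z) (z - zbar)).toLinearMap) hsum hconstraint)

end RobustOptimality

theorem sufficient_optimality_weakly_robust_efficient
    {Z Y : Type*} [NormedAddCommGroup Z] [NormedSpace ℝ Z]
    [NormedAddCommGroup Y] [NormedSpace ℝ Y]
    (K : Set Y) (hKconvex : Convex ℝ K)
    (hKcone : ∀ (c : ℝ), 0 < c → ∀ y ∈ K, c • y ∈ K)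
    (hKpointed : K ∩ (-K) = {0})
    {𝒰 : Type*} [Nonempty 𝒰]
    (n : ℕ) (hn : 0 < n)
    (g : Fin n → Z → 𝒰 → ℝ)
    (f : Z → Y)
    -- subdifferential data
    (S : Z → (Y →L[ℝ] ℝ) → Set (WeakDual ℝ Z))
    (T : Fin n → Z → 𝒰 → Set (WeakDual ℝ Z))
    -- the reference point, robust feasible
    (zbar : Z) (hzbarF : ∀ i : Fin n, ∀ u : 𝒰, g i zbar u ≤ 0)
    -- robust KKT condition at zbar
    (y' : Y →L[ℝ] ℝ) (hy'K : ∀ k ∈ K, 0 ≤ y' k) (hy'0 : y' ≠ 0)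
    (μ : Fin n → ℝ) (hμ : ∀ i, 0 ≤ μ i)
    (v' : WeakDual ℝ Z) (hv' : v' ∈ S zbar y')
    (u' : Fin n → WeakDual ℝ Z)
    (hu' : ∀ i, u' i ∈
      closure (convexHull ℝ (⋃ u ∈ {u : 𝒰 | ∀ u', g i zbar u' ≤ g i zbar u}, T i zbar u)))
    (ubar : Fin n → 𝒰) (hubar : ∀ i, ∀ u', g i zbar u' ≤ g i zbar (ubar i))
    (hKKT : (0 : WeakDual ℝ Z) = v' + ∑ i, μ i • u' i)
    (hcomp : ∀ i, μ i * g i zbar (ubar i) = 0)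
    -- (f, g) is type I pseudo convex at zbar
    (hpcI_a : ∀ z : Z, ∀ w : Y →L[ℝ] ℝ, (∀ k ∈ K, 0 ≤ w k) →
      w (f z) < w (f zbar) → ∀ v ∈ S zbar w, v (z - zbar) < 0)
    (hpcI_b : ∀ z : Z, ∀ u : 𝒰, ∀ i : Fin n, g i z u ≤ g i zbar u →
      ∀ w ∈ T i zbar u, w (z - zbar) ≤ 0) :
    -- zbar is a weakly robust efficient solution
    ∀ z : Z, (∀ i : Fin n, ∀ u : 𝒰, g i z u ≤ 0) →
      f z - f zbar ∉ -interior K :=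
  sufficient_optimality_weakly_robust_efficient_general
    ⟨y', hy'K, hy'0, μ, hμ, v', hv', u', hu', hKKT.symm, fun i => ⟨ubar i, hubar i, hcomp i⟩⟩
    ⟨hpcI_a, hpcI_b⟩
end

section
/- (Example 2.3, strict pseudo convexity of f at z̄.) For every z ∈ ℝ² with z ≠ z̄ and every y = (y₁,y₂,y₃) ∈ ℝ³ with nonnegative components and y ≠ 0: if y₁f₁(z) + y₂f₂(z) + y₃f₃(z) ≤ y₁f₁(z̄) + y₂f₂(z̄) + y₃f₃(z̄), then for all v₁ ∈ A₁, v₂ ∈ A₂, v₃ ∈ A₃ one has ⟨y₁v₁ + y₂v₂ + y₃v₃, z − z̄⟩ < 0. -/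
/-!
Example 2.3: strict pseudo convexity of `f = (f₁, f₂, f₃)` at
`zbar = (0, -2)`, with respect to the explicit limiting subdifferentials
`A₁, A₂, A₃`.
-/

noncomputable section Ex23

def dot (v w : ℝ × ℝ) : ℝ := v.1 * w.1 + v.2 * w.2

def zbar : ℝ × ℝ := (0, -2)

def f₁ (z : ℝ × ℝ) : ℝ :=
  (4 / 5) * z.1 ^ 2 + 5 * |z.1| + (4 / 5) * (z.2 + 2) ^ 2 + (2 / 5) * z.2 + 4 / 5
def f₂ (z : ℝ × ℝ) : ℝ :=
  6 * z.1 ^ 2 + (1 / 2) * |z.1| + 6 * (z.2 + 2) ^ 2 + 3 * z.2 + 6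
def f₃ (z : ℝ × ℝ) : ℝ :=
  z.1 ^ 2 + 4 * |z.1| + (z.2 + 2) ^ 2 + (1 / 2) * z.2 + 1

def A₁ : Set (ℝ × ℝ) := Set.Icc (-5) 5 ×ˢ {2 / 5}
def A₂ : Set (ℝ × ℝ) := Set.Icc (-(1 / 2)) (1 / 2) ×ˢ {3}
def A₃ : Set (ℝ × ℝ) := Set.Icc (-4) 4 ×ˢ {1 / 2}

/-!
For `x = zbar`, each `fᵢ` has the form `σ ‖z - x‖² + c |z₁ - x₁| + β (z₂ - x₂)` with `σ > 0`, so
every `(p, β)` with `|p| ≤ c` is a subgradient at `x` whose inequality is strict away from `x`.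
Strict subgradients survive nonnegative combinations with a nonzero weight, and a strict
subgradient is negative on `z - x` as soon as the value at `z ≠ x` does not exceed the value at `x`.
-/

section StrictSubgradient

variable {𝕜 E ι : Type*} [CommRing 𝕜] [PartialOrder 𝕜] [IsStrictOrderedRing 𝕜]
  [AddCommGroup E] [Module 𝕜 E]

/-- `φ` is a strict subgradient of `f` at `x`: the affine function through `(x, f x)` with linear
part `φ` lies strictly below `f` away from `x`. Subgradients are encoded as linear functionals, so
no inner product on `E` is needed. -/
def IsStrictSubgradientAt (f : E → 𝕜) (φ : Module.Dual 𝕜 E) (x : E) : Prop :=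
  ∀ ⦃z⦄, z ≠ x → f x + φ (z - x) < f z

namespace IsStrictSubgradientAt

theorem apply_sub_neg {f : E → 𝕜} {φ : Module.Dual 𝕜 E} {x z : E}
    (h : IsStrictSubgradientAt f φ x) (hz : z ≠ x) (hle : f z ≤ f x) : φ (z - x) < 0 :=
  (add_lt_iff_neg_left (a := f x)).mp ((h hz).trans_le hle)

theorem sum_smul [Fintype ι] {w : ι → 𝕜} {f : ι → E → 𝕜} {φ : ι → Module.Dual 𝕜 E} {x : E}
    (hw : 0 < w) (h : ∀ i, IsStrictSubgradientAt (f i) (φ i) x) :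
    IsStrictSubgradientAt (∑ i, w i • f i) (∑ i, w i • φ i) x := by
  intro z hz
  obtain ⟨hw_nonneg, j, hj⟩ := Pi.lt_def.mp hw
  simp only [Finset.sum_apply, Pi.smul_apply, LinearMap.sum_apply, LinearMap.smul_apply,
    smul_eq_mul]
  calc ∑ i, w i * f i x + ∑ i, w i * φ i (z - x)
      = ∑ i, w i * (f i x + φ i (z - x)) := by simp only [mul_add, Finset.sum_add_distrib]
    _ < ∑ i, w i * f i z :=
      Finset.sum_lt_sum (fun i _ => mul_le_mul_of_nonneg_left (h i hz).le (hw_nonneg i))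
        ⟨j, Finset.mem_univ j, mul_lt_mul_of_pos_left (h j hz) hj⟩

end IsStrictSubgradientAt

end StrictSubgradient

theorem dot_self_pos {v : ℝ × ℝ} (hv : v ≠ 0) : 0 < dot v v := by
  have hv' : v.1 ≠ 0 ∨ v.2 ≠ 0 := by
    contrapose! hv
    exact Prod.ext hv.1 hv.2
  rcases hv' with h₁ | h₂
  · exact add_pos_of_pos_of_nonneg (mul_self_pos.mpr h₁) (mul_self_nonneg v.2)
  · exact add_pos_of_nonneg_of_pos (mul_self_nonneg v.1) (mul_self_pos.mpr h₂)

/-- The bilinear form `dot`, viewed as the linear map sending a vector of the plane to the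
functional it represents. -/
def dotDual : ℝ × ℝ →ₗ[ℝ] Module.Dual ℝ (ℝ × ℝ) :=
  LinearMap.mk₂ ℝ dot
    (fun u v w => by simp only [dot, Prod.fst_add, Prod.snd_add]; ring)
    (fun r v w => by simp only [dot, Prod.smul_fst, Prod.smul_snd, smul_eq_mul]; ring)
    (fun u v w => by simp only [dot, Prod.fst_add, Prod.snd_add]; ring)
    (fun r v w => by simp only [dot, Prod.smul_fst, Prod.smul_snd, smul_eq_mul]; ring)

theorem dotDual_apply (v w : ℝ × ℝ) : dotDual v w = dot v w := rfl

/-- The common form of `f₁`, `f₂`, `f₃`: a quadratic term with coefficient `σ`, a kink of slope `c`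
in the first coordinate and a linear term of slope `β` in the second, all centred at `x`. -/
def kinkedQuadratic (σ c β : ℝ) (x z : ℝ × ℝ) : ℝ :=
  σ * dot (z - x) (z - x) + c * |(z - x).1| + β * (z - x).2

theorem isStrictSubgradientAt_kinkedQuadratic {σ c β : ℝ} {v x : ℝ × ℝ} (hσ : 0 < σ)
    (hv : v ∈ Set.Icc (-c) c ×ˢ {β}) :
    IsStrictSubgradientAt (kinkedQuadratic σ c β x) (dotDual v) x := by
  obtain ⟨hv₁, hv₂ : v.2 = β⟩ := hv
  intro z hz
  have center_value : kinkedQuadratic σ c β x x = 0 := by simp [kinkedQuadratic, dot]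
  have quadratic_pos : 0 < σ * dot (z - x) (z - x) :=
    mul_pos hσ (dot_self_pos (sub_ne_zero.mpr hz))
  have kink_bound : v.1 * (z - x).1 ≤ c * |(z - x).1| :=
    calc v.1 * (z - x).1 ≤ |v.1| * |(z - x).1| := (le_abs_self _).trans_eq (abs_mul _ _)
      _ ≤ c * |(z - x).1| := mul_le_mul_of_nonneg_right (abs_le.mpr hv₁) (abs_nonneg _)
  calc kinkedQuadratic σ c β x x + dotDual v (z - x)
      = v.1 * (z - x).1 + β * (z - x).2 := by rw [center_value, zero_add, dotDual_apply, dot, hv₂]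
    _ < kinkedQuadratic σ c β x z := by unfold kinkedQuadratic; linarith

theorem f₁_eq_kinkedQuadratic : f₁ = kinkedQuadratic (4 / 5) 5 (2 / 5) zbar := by
  ext z
  simp only [f₁, kinkedQuadratic, dot, zbar, Prod.fst_sub, Prod.snd_sub, sub_zero]
  ring

theorem f₂_eq_kinkedQuadratic : f₂ = kinkedQuadratic 6 (1 / 2) 3 zbar := by
  ext z
  simp only [f₂, kinkedQuadratic, dot, zbar, Prod.fst_sub, Prod.snd_sub, sub_zero]
  ring

theorem f₃_eq_kinkedQuadratic : f₃ = kinkedQuadratic 1 4 (1 / 2) zbar := by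
  ext z
  simp only [f₃, kinkedQuadratic, dot, zbar, Prod.fst_sub, Prod.snd_sub, sub_zero]
  ring

theorem isStrictSubgradientAt_f₁ {v : ℝ × ℝ} (hv : v ∈ A₁) :
    IsStrictSubgradientAt f₁ (dotDual v) zbar :=
  f₁_eq_kinkedQuadratic ▸ isStrictSubgradientAt_kinkedQuadratic (by norm_num) hv

theorem isStrictSubgradientAt_f₂ {v : ℝ × ℝ} (hv : v ∈ A₂) :
    IsStrictSubgradientAt f₂ (dotDual v) zbar :=
  f₂_eq_kinkedQuadratic ▸ isStrictSubgradientAt_kinkedQuadratic (by norm_num) hv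

theorem isStrictSubgradientAt_f₃ {v : ℝ × ℝ} (hv : v ∈ A₃) :
    IsStrictSubgradientAt f₃ (dotDual v) zbar :=
  f₃_eq_kinkedQuadratic ▸ isStrictSubgradientAt_kinkedQuadratic (by norm_num) hv

theorem example23_strictly_pseudo_convex
    (z : ℝ × ℝ) (hz : z ≠ zbar)
    (y₁ y₂ y₃ : ℝ) (hy₁ : 0 ≤ y₁) (hy₂ : 0 ≤ y₂) (hy₃ : 0 ≤ y₃)
    (hy : ¬(y₁ = 0 ∧ y₂ = 0 ∧ y₃ = 0))
    (h : y₁ * f₁ z + y₂ * f₂ z + y₃ * f₃ z ≤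
         y₁ * f₁ zbar + y₂ * f₂ zbar + y₃ * f₃ zbar) :
    ∀ v₁ ∈ A₁, ∀ v₂ ∈ A₂, ∀ v₃ ∈ A₃,
      dot (y₁ • v₁ + y₂ • v₂ + y₃ • v₃) (z - zbar) < 0 := by
  intro v₁ hv₁ v₂ hv₂ v₃ hv₃
  have weights_pos : 0 < ![y₁, y₂, y₃] := by
    refine lt_of_le_of_ne ?_ (Ne.symm ?_)
    · simp [Pi.le_def, Fin.forall_fin_succ, hy₁, hy₂, hy₃]
    · simpa using hy
  have subgradients : ∀ i, IsStrictSubgradientAt (![f₁, f₂, f₃] i)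
      (![dotDual v₁, dotDual v₂, dotDual v₃] i) zbar := by
    simp [Fin.forall_fin_succ, isStrictSubgradientAt_f₁ hv₁, isStrictSubgradientAt_f₂ hv₂,
      isStrictSubgradientAt_f₃ hv₃]
  have combination_neg := (IsStrictSubgradientAt.sum_smul weights_pos subgradients).apply_sub_neg hz
    (by simpa [Fin.sum_univ_three] using h)
  simpa [Fin.sum_univ_three, ← dotDual_apply] using combination_neg

end Ex23
end
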